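/- arXiv:1207.3739 — 2 statements merged into one kernel-verified Lean document; each statement's English description precedes it below -/
import Mathlib

section
/- Let A be a finite-dimensional left Leibniz algebra that is not nilpotent but all of whose proper subalgebras are nilpotent. Then dim(A/A²) ≤ 1. -/
open Polynomial LinearMap

/-- A (left) Leibniz algebra structure on the `K`-vector space `A`:
a bilinear multiplication satisfying `x(yz) = (xy)z + y(xz)`. -/
structure LeibnizMul (K A : Type*) [Field K] [AddCommGroup A] [Module K A] where
  mul : A →ₗ[K] A →ₗ[K] A
  leibniz : ∀ x y z, mul x (mul y z) = mul (mul x y) z + mul y (mul x z)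

namespace LeibnizMul

variable {K A : Type*} [Field K] [AddCommGroup A] [Module K A]

/-- The product of two subspaces: the span of all products `s·t`, `s ∈ S`, `t ∈ T`. -/
def mulSub (m : LeibnizMul K A) (S T : Submodule K A) : Submodule K A :=
  Submodule.span K (Set.image2 (fun x y => m.mul x y) (S : Set A) (T : Set A))

/-- Relative lower central series of the subalgebra `S`: `lcsIn m S n = S^(n+1)`,
i.e. `lcsIn m S 0 = S` and `lcsIn m S (n+1) = S · (lcsIn m S n)`. -/
def lcsIn (m : LeibnizMul K A) (S : Submodule K A) : ℕ → Submodule K A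
  | 0 => S
  | (n+1) => m.mulSub S (m.lcsIn S n)

/-- `A` is nilpotent: some term of the lower central series vanishes. -/
def IsNilpotent (m : LeibnizMul K A) : Prop := ∃ n, m.lcsIn ⊤ n = ⊥

/-- `S` is a subalgebra: a subspace closed under multiplication. -/
def IsSubalg (m : LeibnizMul K A) (S : Submodule K A) : Prop :=
  ∀ x ∈ S, ∀ y ∈ S, m.mul x y ∈ S

/-- `S` is a (two-sided) ideal. -/
def IsIdeal (m : LeibnizMul K A) (S : Submodule K A) : Prop :=
  ∀ (x : A), ∀ y ∈ S, m.mul x y ∈ S ∧ m.mul y x ∈ S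

/-- `M` is a maximal (proper) subalgebra. -/
def IsMaxSubalg (m : LeibnizMul K A) (M : Submodule K A) : Prop :=
  m.IsSubalg M ∧ M ≠ ⊤ ∧ ∀ S, m.IsSubalg S → M < S → S = ⊤

/-- The Frattini subalgebra: the intersection of all maximal subalgebras. -/
def frattini (m : LeibnizMul K A) : Submodule K A :=
  sInf {M | m.IsMaxSubalg M}

/-- The subalgebra generated by a single element `a`. -/
def subalgGen (m : LeibnizMul K A) (a : A) : Submodule K A :=
  sInf {S | m.IsSubalg S ∧ a ∈ S}

/-- The normal closure of a subspace: the smallest ideal containing it. -/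
def normalClosure (m : LeibnizMul K A) (S : Submodule K A) : Submodule K A :=
  sInf {I | m.IsIdeal I ∧ S ≤ I}

/-- The normalizer of a subspace `C`: all `x` with `x·c ∈ C` and `c·x ∈ C` for all `c ∈ C`. -/
def normalizer (m : LeibnizMul K A) (C : Submodule K A) : Submodule K A :=
  ⨅ c : C, (Submodule.comap (m.mul.flip (c : A)) C ⊓ Submodule.comap (m.mul (c : A)) C)

/-- The center of the subalgebra `S`: all `z ∈ S` with `z·x = x·z = 0` for all `x ∈ S`. -/
def centerIn (m : LeibnizMul K A) (S : Submodule K A) : Submodule K A :=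
  S ⊓ ⨅ x : S, (LinearMap.ker (m.mul.flip (x : A)) ⊓ LinearMap.ker (m.mul (x : A)))

/-- All `z ∈ S` with `z·x ∈ T` and `x·z ∈ T` for all `x ∈ S`. -/
def relCentralizer (m : LeibnizMul K A) (S T : Submodule K A) : Submodule K A :=
  S ⊓ ⨅ x : S, (Submodule.comap (m.mul.flip (x : A)) T ⊓ Submodule.comap (m.mul (x : A)) T)

/-- The upper central series of the subalgebra `S`:
`Z₀ = 0`, `Z_{j+1} = {z ∈ S : zS ⊆ Z_j and Sz ⊆ Z_j}`. -/
def ucsIn (m : LeibnizMul K A) (S : Submodule K A) : ℕ → Submodule K A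
  | 0 => ⊥
  | (j+1) => m.relCentralizer S (m.ucsIn S j)

/-- The right center `{r : A·r = 0}`. -/
def rightCenter (m : LeibnizMul K A) : Submodule K A := LinearMap.ker m.mul.flip

/-- Left-normed powers of `a`: `lpow m a k = a^(k+1)`. -/
def lpow (m : LeibnizMul K A) (a : A) : ℕ → A
  | 0 => a
  | (k+1) => m.mul a (m.lpow a k)

/-- The Fitting null component of left multiplication by `a`. -/
def fittingNull (m : LeibnizMul K A) (a : A) : Submodule K A :=
  ⨆ k, LinearMap.ker ((m.mul a) ^ k)

end LeibnizMul

namespace LeibnizMul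

variable {K A : Type*} [Field K] [AddCommGroup A] [Module K A]

theorem mulSub_le (m : LeibnizMul K A) {S T U : Submodule K A} :
    m.mulSub S T ≤ U ↔ ∀ x ∈ S, ∀ y ∈ T, m.mul x y ∈ U := by
  simp only [mulSub, Submodule.span_le, Set.image2_subset_iff, SetLike.mem_coe]

theorem mul_mem_mulSub (m : LeibnizMul K A) {S T : Submodule K A} {x y : A}
    (hx : x ∈ S) (hy : y ∈ T) : m.mul x y ∈ m.mulSub S T :=
  m.mulSub_le.1 le_rfl x hx y hy

theorem mulSub_bot (m : LeibnizMul K A) (S : Submodule K A) : m.mulSub S ⊥ = ⊥ := by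
  rw [eq_bot_iff, mulSub_le]
  rintro x - y hy
  simp [(Submodule.mem_bot K).1 hy]

theorem lcsIn_eq_bot_of_le (m : LeibnizMul K A) {S : Submodule K A} {n k : ℕ}
    (h : m.lcsIn S n = ⊥) (hk : n ≤ k) : m.lcsIn S k = ⊥ := by
  induction k, hk using Nat.le_induction with
  | base => exact h
  | succ k _ ih => rw [lcsIn, ih, mulSub_bot]

/-- The powers of an ideal are stable under left multiplication by the whole algebra. -/
theorem mul_mem_lcsIn (m : LeibnizMul K A) {S : Submodule K A} (hS : m.IsIdeal S) (n : ℕ)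
    (x : A) {y : A} (hy : y ∈ m.lcsIn S n) : m.mul x y ∈ m.lcsIn S n := by
  induction n generalizing y with
  | zero => exact (hS x y hy).1
  | succ n ih =>
    suffices h : m.lcsIn S (n + 1) ≤ (m.lcsIn S (n + 1)).comap (m.mul x) from h hy
    refine m.mulSub_le.2 fun s hs z hz => ?_
    rw [Submodule.mem_comap, m.leibniz]
    exact add_mem (m.mul_mem_mulSub (hS x s hs).1 hz) (m.mul_mem_mulSub hs (ih hz))

/-- The powers `S^n` of an ideal `S`, with the convention `S^0 = A`. -/
def idealPow (m : LeibnizMul K A) (S : Submodule K A) : ℕ → Submodule K A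
  | 0 => ⊤
  | (n+1) => m.lcsIn S n

theorem mul_mem_idealPow (m : LeibnizMul K A) {S : Submodule K A} (hS : m.IsIdeal S) (n : ℕ)
    (x : A) {y : A} (hy : y ∈ m.idealPow S n) : m.mul x y ∈ m.idealPow S n := by
  cases n with
  | zero => exact Submodule.mem_top
  | succ n => exact m.mul_mem_lcsIn hS n x hy

theorem mul_mem_idealPow_succ (m : LeibnizMul K A) {S : Submodule K A} (hS : m.IsIdeal S) (n : ℕ)
    {x y : A} (hx : x ∈ S) (hy : y ∈ m.idealPow S n) : m.mul x y ∈ m.idealPow S (n + 1) := by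
  cases n with
  | zero => exact (hS y x hx).2
  | succ n => exact m.mul_mem_mulSub hx hy

theorem lcsIn_top_le_iSup_idealPow (m : LeibnizMul K A) {S T : Submodule K A} (hS : m.IsIdeal S)
    (hT : m.IsIdeal T) (hST : S ⊔ T = ⊤) (k : ℕ) :
    m.lcsIn ⊤ k ≤ ⨆ p : {p : ℕ × ℕ // p.1 + p.2 = k},
      m.idealPow S p.1.1 ⊓ m.idealPow T p.1.2 := by
  induction k with
  | zero => exact le_iSup_of_le ⟨(0, 0), rfl⟩ (by simp [idealPow])
  | succ k ih =>
    refine m.mulSub_le.2 fun x _ y hy => ?_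
    obtain ⟨s, hs, t, ht, rfl⟩ := Submodule.mem_sup.1 (hST ▸ Submodule.mem_top (x := x))
    suffices h : ∀ p : {p : ℕ × ℕ // p.1 + p.2 = k},
        m.idealPow S p.1.1 ⊓ m.idealPow T p.1.2 ≤
          (⨆ p : {p : ℕ × ℕ // p.1 + p.2 = k + 1},
            m.idealPow S p.1.1 ⊓ m.idealPow T p.1.2).comap (m.mul (s + t)) from
      iSup_le h (ih hy)
    rintro ⟨⟨a, b⟩, hab⟩ z ⟨hzS, hzT⟩
    rw [Submodule.mem_comap, map_add, LinearMap.add_apply]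
    dsimp only at hab
    refine add_mem ?_ ?_
    · exact Submodule.mem_iSup_of_mem ⟨(a + 1, b), by dsimp only; omega⟩
        ⟨m.mul_mem_idealPow_succ hS a hs hzS, m.mul_mem_idealPow hT b s hzT⟩
    · exact Submodule.mem_iSup_of_mem ⟨(a, b + 1), by dsimp only; omega⟩
        ⟨m.mul_mem_idealPow hS a t hzS, m.mul_mem_idealPow_succ hT b ht hzT⟩

theorem idealPow_eq_bot_of_lt (m : LeibnizMul K A) {S : Submodule K A} {n k : ℕ}
    (h : m.lcsIn S n = ⊥) (hk : n < k) : m.idealPow S k = ⊥ := by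
  cases k with
  | zero => omega
  | succ k => exact m.lcsIn_eq_bot_of_le h (by omega)

/-- An algebra that is the sum of two nilpotent ideals is nilpotent. -/
theorem isNilpotent_of_sup_eq_top (m : LeibnizMul K A) {S T : Submodule K A} (hS : m.IsIdeal S)
    (hT : m.IsIdeal T) (hST : S ⊔ T = ⊤) (hnS : ∃ n, m.lcsIn S n = ⊥)
    (hnT : ∃ n, m.lcsIn T n = ⊥) : m.IsNilpotent := by
  obtain ⟨a, ha⟩ := hnS
  obtain ⟨b, hb⟩ := hnT
  refine ⟨a + b + 1, eq_bot_iff.2 <| (m.lcsIn_top_le_iSup_idealPow hS hT hST _).trans ?_⟩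
  refine iSup_le fun ⟨⟨i, j⟩, hij⟩ => ?_
  dsimp only at hij ⊢
  rcases lt_or_ge a i with h | h
  · exact inf_le_left.trans (m.idealPow_eq_bot_of_lt ha h).le
  · exact inf_le_right.trans (m.idealPow_eq_bot_of_lt hb (by omega)).le

theorem isIdeal_of_mulSub_top_le (m : LeibnizMul K A) {S : Submodule K A}
    (h : m.mulSub ⊤ ⊤ ≤ S) : m.IsIdeal S := fun _ _ _ =>
  ⟨h (m.mul_mem_mulSub trivial trivial), h (m.mul_mem_mulSub trivial trivial)⟩

theorem IsIdeal.isSubalg {m : LeibnizMul K A} {S : Submodule K A} (h : m.IsIdeal S) :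
    m.IsSubalg S := fun x _ y hy => (h x y hy).1

end LeibnizMul

/-- A space of dimension at least two is the sum of two proper subspaces. -/
theorem Submodule.exists_ne_top_sup_eq_top {K V : Type*} [Field K] [AddCommGroup V] [Module K V]
    (h : 1 < Module.finrank K V) : ∃ S T : Submodule K V, S ≠ ⊤ ∧ T ≠ ⊤ ∧ S ⊔ T = ⊤ := by
  have : Nontrivial V := Module.nontrivial_of_finrank_pos (R := K) (by omega)
  obtain ⟨v, hv⟩ := exists_ne (0 : V)
  obtain ⟨T, hT⟩ := Submodule.exists_isCompl (Submodule.span K {v})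
  refine ⟨_, T, fun htop => ?_, fun htop => ?_, hT.sup_eq_top⟩
  · have := finrank_span_singleton (K := K) hv
    rw [htop, finrank_top] at this
    omega
  · have := hT.inf_eq_bot
    simp [htop, hv] at this

/-- if `A` is not nilpotent but all proper subalgebras are nilpotent,
then `dim(A/A²) ≤ 1`. -/
theorem stmt6 {K A : Type*} [Field K] [AddCommGroup A] [Module K A] [FiniteDimensional K A]
    (m : LeibnizMul K A) (hA : ¬ m.IsNilpotent)
    (hsub : ∀ S : Submodule K A, m.IsSubalg S → S ≠ ⊤ → ∃ n, m.lcsIn S n = ⊥) :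
    Module.finrank K (A ⧸ m.mulSub ⊤ ⊤) ≤ 1 := by
  by_contra! h
  obtain ⟨S, T, hS, hT, hST⟩ := Submodule.exists_ne_top_sup_eq_top h
  have hsurj := (m.mulSub ⊤ ⊤).mkQ_surjective
  have ideal (U : Submodule K (A ⧸ m.mulSub ⊤ ⊤)) : m.IsIdeal (U.comap (m.mulSub ⊤ ⊤).mkQ) :=
    m.isIdeal_of_mulSub_top_le (Submodule.le_comap_mkQ _ U)
  have nilp (U : Submodule K (A ⧸ m.mulSub ⊤ ⊤)) (hU : U ≠ ⊤) :
      ∃ n, m.lcsIn (U.comap (m.mulSub ⊤ ⊤).mkQ) n = ⊥ :=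
    hsub _ (ideal U).isSubalg fun htop =>
      hU (Submodule.comap_injective_of_surjective hsurj (htop.trans (Submodule.comap_top _).symm))
  refine hA (m.isNilpotent_of_sup_eq_top (ideal S) (ideal T) ?_ (nilp S hS) (nilp T hT))
  rw [← top_le_iff]
  intro x _
  obtain ⟨s, hs, t, ht, hx⟩ := Submodule.mem_sup.1
    (hST ▸ Submodule.mem_top (x := (m.mulSub ⊤ ⊤).mkQ x))
  obtain ⟨a, rfl⟩ := hsurj s
  refine Submodule.mem_sup.2 ⟨a, hs, x - a, ?_, by abel⟩
  rw [Submodule.mem_comap, map_sub, ← hx, add_sub_cancel_left]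
  exact ht
end

section
/- Let A be a finite-dimensional cyclic left Leibniz algebra generated by a. Then the Fitting null component A₀ of the operator L_a (left multiplication by a) acting on A is a nilpotent subalgebra of A. -/
open Polynomial LinearMap

namespace LeibnizMul

variable {K A : Type*} [Field K] [AddCommGroup A] [Module K A]

/-- In a cyclic Leibniz algebra generated by `a`, every left multiplication is a scalar multiple
of left multiplication by `a`. -/
theorem exists_mul_eq_smul (m : LeibnizMul K A) {a : A} (hcyc : m.subalgGen a = ⊤) (x : A) :
    ∃ c : K, m.mul x = c • m.mul a := by
  have hle : m.subalgGen a ≤ (K ∙ m.mul a).comap m.mul := by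
    refine sInf_le ⟨fun y hy z hz => ?_, Submodule.mem_span_singleton_self _⟩
    obtain ⟨c, hc⟩ := Submodule.mem_span_singleton.1 (Submodule.mem_comap.1 hy)
    obtain ⟨d, hd⟩ := Submodule.mem_span_singleton.1 (Submodule.mem_comap.1 hz)
    have hzero : m.mul (m.mul y z) = 0 := by
      ext w
      have h := m.leibniz y z w
      have hcomm : m.mul y (m.mul z w) = m.mul z (m.mul y w) := by
        simp only [← hc, ← hd, LinearMap.smul_apply, map_smul, smul_comm c d]
      rw [hcomm] at h
      simpa using h
    rw [Submodule.mem_comap, hzero]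
    exact Submodule.zero_mem _
  have hx : x ∈ m.subalgGen a := hcyc ▸ Submodule.mem_top
  obtain ⟨c, hc⟩ := Submodule.mem_span_singleton.1 (Submodule.mem_comap.1 (hle hx))
  exact ⟨c, hc.symm⟩

/-- In finite dimension the Fitting null component is the kernel of a single power. -/
theorem fittingNull_eq_ker_pow_finrank [FiniteDimensional K A] (m : LeibnizMul K A) (a : A) :
    m.fittingNull a = LinearMap.ker ((m.mul a) ^ Module.finrank K A) :=
  le_antisymm (iSup_le fun _ => Module.End.ker_pow_le_ker_pow_finrank _ _)
    (le_iSup (fun k => LinearMap.ker ((m.mul a) ^ k)) _)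

/-- If left multiplications are multiples of left multiplication by `a`, then the lower central
series of `S` lies in the images of `S` under the powers of left multiplication by `a`. -/
theorem lcsIn_le_map_pow (m : LeibnizMul K A) {a : A}
    (h : ∀ x, ∃ c : K, m.mul x = c • m.mul a) (S : Submodule K A) (n : ℕ) :
    m.lcsIn S n ≤ S.map ((m.mul a) ^ n) := by
  induction n with
  | zero => exact fun x hx => ⟨x, hx, rfl⟩
  | succ n ih =>
    refine Submodule.span_le.2 ?_
    rintro _ ⟨x, -, y, hy, rfl⟩
    obtain ⟨c, hc⟩ := h x
    obtain ⟨z, hz, rfl⟩ := ih hy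
    refine ⟨c • z, S.smul_mem c hz, ?_⟩
    simp [hc, pow_succ']

end LeibnizMul

/-- in a cyclic Leibniz algebra generated by `a`, the Fitting null
component of `L_a` is a nilpotent subalgebra. -/
theorem stmt12 {K A : Type*} [Field K] [AddCommGroup A] [Module K A] [FiniteDimensional K A]
    (m : LeibnizMul K A) (a : A) (hcyc : m.subalgGen a = ⊤) :
    m.IsSubalg (m.fittingNull a) ∧ ∃ n, m.lcsIn (m.fittingNull a) n = ⊥ := by
  have h := m.exists_mul_eq_smul hcyc
  rw [m.fittingNull_eq_ker_pow_finrank]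
  refine ⟨fun x _ y hy => ?_, Module.finrank K A, ?_⟩
  · obtain ⟨c, hc⟩ := h x
    rw [LinearMap.mem_ker] at hy ⊢
    rw [hc, LinearMap.smul_apply, map_smul, ← Module.End.mul_apply, ← pow_succ, pow_succ',
      Module.End.mul_apply, hy, map_zero, smul_zero]
  · refine eq_bot_iff.2 ((m.lcsIn_le_map_pow h _ _).trans ?_)
    rintro _ ⟨z, hz, rfl⟩
    exact hz
end
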